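/- The function γ ↦ 1/(γ·(1/(1−γ) − 1 + γ)) is strictly decreasing on (0,1), and the function γ ↦ −log(1 − 2γ)/(1/(1−γ) − 1 + γ) is strictly increasing on (0, 1/2). -/

import Mathlib

/-!
Put `y = γ / (1 - γ)`. Then `1 / (1 - γ) - 1 + γ = y + γ = y * (2 - γ)`. The first form is visibly
positive and increasing on `(0, 1)`, which settles the first function. Moreover
`1 - 2 * γ = (1 - y) / (1 + y)`, so `-log (1 - 2 * γ) = 2 * artanh y` and the second function is
`(artanh y / y) * (2 / (2 - γ))`. Both factors are positive and increasing, the first one because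
`artanh y / y = ∑ y ^ (2 * k) / (2 * k + 1)` has positive coefficients.
-/

open Set

theorem one_div_one_sub_sub_one {K : Type*} [DivisionRing K] {x : K} (hx : x ≠ 1) :
    1 / (1 - x) - 1 = x / (1 - x) := by
  rw [div_sub_one (sub_ne_zero.2 hx.symm), sub_sub_cancel]

theorem one_div_one_sub_sub_one_add_eq_mul {K : Type*} [Field K] {x : K}
    (hx : x ≠ 1) : 1 / (1 - x) - 1 + x = x / (1 - x) * (2 - x) := by
  have : 1 - x ≠ 0 := sub_ne_zero.2 hx.symm
  field_simp
  ring

section Order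

theorem strictMonoOn_mul_of_nonneg {α M₀ : Type*} [Preorder α] [MulZeroClass M₀] [Preorder M₀]
    [PosMulStrictMono M₀] [MulPosMono M₀] {f g : α → M₀} {s : Set α}
    (hf : StrictMonoOn f s) (hg : StrictMonoOn g s)
    (hf₀ : ∀ x ∈ s, 0 ≤ f x) (hg₀ : ∀ x ∈ s, 0 ≤ g x) :
    StrictMonoOn (fun x => f x * g x) s := fun x hx _ hy hxy =>
  mul_lt_mul'' (hf hx hy hxy) (hg hx hy hxy) (hf₀ x hx) (hg₀ x hx)

variable {K : Type*} [Field K] [LinearOrder K] [IsStrictOrderedRing K]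

theorem strictMonoOn_div_sub {a c : K} (ha : 0 < a) :
    StrictMonoOn (fun x => a / (c - x)) (Iio c) := fun _ _ _ hy hxy =>
  div_lt_div_of_pos_left ha (sub_pos.2 hy) (sub_lt_sub_left hxy c)

theorem strictMonoOn_div_one_sub : StrictMonoOn (fun x : K => x / (1 - x)) (Iio 1) :=
  ((strictMonoOn_div_sub one_pos).add_const (-1)).congr fun x hx => by
    simp only [← sub_eq_add_neg, one_div_one_sub_sub_one (mem_Iio.1 hx).ne]

theorem strictMonoOn_one_div_one_sub_sub_one_add :
    StrictMonoOn (fun x : K => 1 / (1 - x) - 1 + x) (Iio 1) :=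
  (strictMonoOn_div_one_sub.add strictMonoOn_id).congr fun x hx => by
    simp only [one_div_one_sub_sub_one (mem_Iio.1 hx).ne, id]

theorem one_div_one_sub_sub_one_add_pos {x : K} (hx : x ∈ Ioo 0 1) : 0 < 1 / (1 - x) - 1 + x := by
  simpa using strictMonoOn_one_div_one_sub_sub_one_add (mem_Iio.2 one_pos) hx.2 hx.1

theorem div_one_sub_mem_Ioo {x : K} (hx : x ∈ Ioo 0 (1 / 2)) : x / (1 - x) ∈ Ioo 0 1 := by
  obtain ⟨hx₀, hx₁⟩ := hx
  have : 0 < 1 - x := by linarith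
  exact ⟨div_pos hx₀ this, (div_lt_one this).2 (by linarith)⟩

end Order

section Artanh

open Real

theorem hasSum_artanh_div_self {x : ℝ} (hx : |x| < 1) (hx₀ : x ≠ 0) :
    HasSum (fun k : ℕ => x ^ (2 * k) / (2 * k + 1)) (artanh x / x) := by
  obtain ⟨hneg, hlt⟩ := abs_lt.1 hx
  have artanh_eq : artanh x = (log (1 + x) - log (1 - x)) / 2 := by
    rw [artanh_eq_half_log ⟨hneg.le, hlt.le⟩, log_div (by linarith) (by linarith)]
    ring
  rw [artanh_eq, div_div]
  refine ((hasSum_log_sub_log_of_abs_lt_one hx).div_const (2 * x)).congr_fun ?_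
  intro k
  field_simp
  rw [pow_succ]

theorem strictMonoOn_artanh_div_self : StrictMonoOn (fun x => artanh x / x) (Ioo 0 1) := by
  have hasSum {x : ℝ} (hx : x ∈ Ioo 0 1) :=
    hasSum_artanh_div_self (abs_lt.2 ⟨by linarith [hx.1], hx.2⟩) hx.1.ne'
  intro x hx y hy hxy
  have hx₀ : 0 ≤ x := hx.1.le
  refine hasSum_lt (i := 1) (fun k => ?_) ?_ (hasSum hx) (hasSum hy)
  · dsimp only
    gcongr
  · gcongr

theorem two_mul_artanh_div_one_sub {x : ℝ} (hx : x < 1 / 2) :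
    2 * artanh (x / (1 - x)) = -log (1 - 2 * x) := by
  have h_pos : 0 < 1 - x := by linarith
  have mem : x / (1 - x) ∈ Icc (-1) 1 :=
    ⟨(le_div_iff₀ h_pos).2 (by linarith), (div_le_one h_pos).2 (by linarith)⟩
  have ratio : (1 + x / (1 - x)) / (1 - x / (1 - x)) = (1 - 2 * x)⁻¹ := by
    rw [one_add_div h_pos.ne', one_sub_div h_pos.ne', div_div_div_cancel_right₀ h_pos.ne',
      ← one_div]
    ring_nf
  rw [artanh_eq_half_log mem, ratio, log_inv]
  ring

theorem neg_log_one_sub_two_mul_div_eq {x : ℝ} (hx : x < 1 / 2) :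
    -log (1 - 2 * x) / (1 / (1 - x) - 1 + x) =
      artanh (x / (1 - x)) / (x / (1 - x)) * (2 / (2 - x)) := by
  rw [one_div_one_sub_sub_one_add_eq_mul (by linarith), ← two_mul_artanh_div_one_sub hx,
    div_mul_div_comm, mul_comm 2]

end Artanh

/-- The function `γ ↦ 1/(γ·(1/(1−γ) − 1 + γ))` is strictly decreasing on
`(0,1)`, and the function `γ ↦ −log(1 − 2γ)/(1/(1−γ) − 1 + γ)` is strictly increasing on
`(0,1/2)`. -/
theorem criteria_monotonicity :
    StrictAntiOn (fun γ : ℝ => 1 / (γ * (1 / (1 - γ) - 1 + γ))) (Set.Ioo (0 : ℝ) 1) ∧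
      StrictMonoOn (fun γ : ℝ => -Real.log (1 - 2 * γ) / (1 / (1 - γ) - 1 + γ))
        (Set.Ioo (0 : ℝ) (1 / 2)) := by
  constructor
  · have denom_mono : StrictMonoOn (fun γ : ℝ => γ * (1 / (1 - γ) - 1 + γ)) (Ioo 0 1) :=
      strictMonoOn_mul_of_nonneg strictMonoOn_id
        (strictMonoOn_one_div_one_sub_sub_one_add.mono Ioo_subset_Iio_self)
        (fun _ hγ => hγ.1.le) (fun _ hγ => (one_div_one_sub_sub_one_add_pos hγ).le)
    exact one_div_strictAntiOn.comp_strictMonoOn denom_mono fun _ hγ =>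
      mul_pos hγ.1 (one_div_one_sub_sub_one_add_pos hγ)
  · have artanh_factor_mono :
        StrictMonoOn (fun γ : ℝ => Real.artanh (γ / (1 - γ)) / (γ / (1 - γ))) (Ioo 0 (1 / 2)) :=
      strictMonoOn_artanh_div_self.comp
        (strictMonoOn_div_one_sub.mono fun γ hγ => mem_Iio.2 (by linarith [hγ.2]))
        fun _ => div_one_sub_mem_Ioo
    have rational_factor_mono : StrictMonoOn (fun γ : ℝ => 2 / (2 - γ)) (Ioo 0 (1 / 2)) :=
      (strictMonoOn_div_sub two_pos).mono fun γ hγ => mem_Iio.2 (by linarith [hγ.2])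
    refine (strictMonoOn_mul_of_nonneg artanh_factor_mono rational_factor_mono (fun γ hγ => ?_)
      fun γ hγ => ?_).congr fun γ hγ => (neg_log_one_sub_two_mul_div_eq hγ.2).symm
    · have hy := div_one_sub_mem_Ioo hγ
      exact (div_pos (Real.artanh_pos hy) hy.1).le
    · exact div_nonneg zero_le_two (by linarith [hγ.2])
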